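/- Let ψ be a Cartan–Hadamard model function with ∫₀^∞ Θ(s)^{1/(p−1)} ds = +∞ and such that either (a) there exist γ ∈ [0,1) and ℓ ∈ (0,∞) with lim_{r→∞} r^γ·ψ′(r)/ψ(r) = ℓ, or (b) lim_{r→∞} ψ′(r)/ψ(r) = +∞ and lim_{r→∞} (ψ(r)/ψ′(r))·(d/dr) log(ψ′(r)/ψ(r)) = 0. Let u be a global radial solution. Then there exist no constants C > 0 and β > 0 such that u(r) ≤ C·ψ(r)^{−β} for all r > 0. -/

import Mathlib

open Real Filter MeasureTheory
open scoped ENNReal Topology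

/-- The volume-to-surface ratio `Θ(r) = (∫₀ʳ ψ(s)^{n-1} ds) / ψ(r)^{n-1}`. -/
noncomputable def Theta (n : ℕ) (ψ : ℝ → ℝ) (r : ℝ) : ℝ :=
  (∫ s in (0:ℝ)..r, ψ s ^ (n - 1)) / ψ r ^ (n - 1)

/-- A Cartan–Hadamard model function: smooth, `ψ(0)=0`, `ψ'(0)=1`, convex on `[0,∞)`,
positive on `(0,∞)`. -/
def IsCHModel (ψ : ℝ → ℝ) : Prop :=
  ContDiff ℝ (⊤ : ℕ∞) ψ ∧ ψ 0 = 0 ∧ deriv ψ 0 = 1 ∧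
    (∀ r : ℝ, 0 ≤ r → 0 ≤ deriv (deriv ψ) r) ∧ (∀ r : ℝ, 0 < r → 0 < ψ r)

/-- A radial solution on `[0,T)` (with `T ∈ (0,∞]`) with initial datum `α`:
`u ∈ C¹([0,T))`, `u(0)=α`, `u'(0)=0`, `u>0` on `[0,T)`, and
`(ψ^{n-1} |u'|^{p-2} u')' = -ψ^{n-1} u^q` on `(0,T)`. -/
structure IsRadialSolution (n : ℕ) (p q : ℝ) (ψ : ℝ → ℝ) (T : ℝ≥0∞) (α : ℝ)
    (u : ℝ → ℝ) : Prop where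
  init : u 0 = α
  deriv_init : deriv u 0 = 0
  pos : ∀ r : ℝ, 0 ≤ r → ENNReal.ofReal r < T → 0 < u r
  diff : ∀ r : ℝ, 0 ≤ r → ENNReal.ofReal r < T → DifferentiableAt ℝ u r
  deriv_cont : ContinuousOn (deriv u) {r : ℝ | 0 ≤ r ∧ ENNReal.ofReal r < T}
  eqn : ∀ r : ℝ, 0 < r → ENNReal.ofReal r < T →
    HasDerivAt (fun s => ψ s ^ (n - 1) * |deriv u s| ^ (p - 2) * deriv u s)
      (-(ψ r ^ (n - 1) * u r ^ q)) r

/-- The energy function `F_u(r) = ((p-1)/p)|u'(r)|^p + u(r)^{q+1}/(q+1)`. -/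
noncomputable def energyF (p q : ℝ) (u : ℝ → ℝ) (r : ℝ) : ℝ :=
  (p - 1) / p * |deriv u r| ^ p + u r ^ (q + 1) / (q + 1)

/-- The Pohozaev function
`P_u(r) = (∫₀ʳ ψ^{n-1}) F_u(r) + (ψ(r)^{n-1}/(q+1)) |u'(r)|^{p-2} u'(r) u(r)`. -/
noncomputable def pohozaevP (n : ℕ) (p q : ℝ) (ψ u : ℝ → ℝ) (r : ℝ) : ℝ :=
  (∫ s in (0:ℝ)..r, ψ s ^ (n - 1)) * energyF p q u r +
    ψ r ^ (n - 1) / (q + 1) * (|deriv u r| ^ (p - 2) * deriv u r * u r)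

/-- `K(r) = ((p-1)/p + 1/(q+1)) ψ(r)^{n-1} - (n-1)(ψ'(r)/ψ(r)) ∫₀ʳ ψ^{n-1}`. -/
noncomputable def Kfun (n : ℕ) (p q : ℝ) (ψ : ℝ → ℝ) (r : ℝ) : ℝ :=
  ((p - 1) / p + 1 / (q + 1)) * ψ r ^ (n - 1) -
    ((n : ℝ) - 1) * (deriv ψ r / ψ r) * ∫ s in (0:ℝ)..r, ψ s ^ (n - 1)

/-- Condition (a): `r^γ ψ'(r)/ψ(r) → ℓ ∈ (0,∞)` for some `γ ∈ [0,1)`. -/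
def CondA (ψ : ℝ → ℝ) : Prop :=
  ∃ γ ℓ : ℝ, 0 ≤ γ ∧ γ < 1 ∧ 0 < ℓ ∧
    Tendsto (fun r : ℝ => r ^ γ * deriv ψ r / ψ r) atTop (nhds ℓ)

/-- Condition (b): `ψ'/ψ → +∞` and `(ψ/ψ') (log(ψ'/ψ))' → 0`. -/
def CondB (ψ : ℝ → ℝ) : Prop :=
  Tendsto (fun r : ℝ => deriv ψ r / ψ r) atTop atTop ∧
    Tendsto (fun r : ℝ => ψ r / deriv ψ r *
      deriv (fun s : ℝ => Real.log (deriv ψ s / ψ s)) r) atTop (nhds 0)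

namespace IsCHModel

variable {ψ : ℝ → ℝ}

theorem hasDerivAt (h : IsCHModel ψ) (r : ℝ) : HasDerivAt ψ (deriv ψ r) r :=
  (h.1.differentiable (by simp) r).hasDerivAt

theorem hasDerivAt_deriv (h : IsCHModel ψ) (r : ℝ) :
    HasDerivAt (deriv ψ) (deriv (deriv ψ) r) r := by
  have h1 : ContDiff ℝ (1 + 1) ψ := by exact_mod_cast contDiff_infty.1 h.1 2
  have h2 : ContDiff ℝ 1 (deriv ψ) := h1.deriv'
  exact (h2.differentiable (by simp) r).hasDerivAt

theorem continuous (h : IsCHModel ψ) : Continuous ψ := h.1.continuous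

theorem one_le_deriv (h : IsCHModel ψ) {r : ℝ} (hr : 0 ≤ r) : 1 ≤ deriv ψ r := by
  have hmono : MonotoneOn (deriv ψ) (Set.Ici 0) := by
    apply monotoneOn_of_deriv_nonneg (convex_Ici 0)
    · exact fun x _ => (h.hasDerivAt_deriv x).continuousAt.continuousWithinAt
    · exact fun x _ => (h.hasDerivAt_deriv x).differentiableAt.differentiableWithinAt
    · intro x hx
      rw [interior_Ici] at hx
      exact h.2.2.2.1 x (le_of_lt hx)
  have := hmono (Set.mem_Ici.2 le_rfl) (Set.mem_Ici.2 hr) hr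
  rwa [h.2.2.1] at this

theorem monotoneOn (h : IsCHModel ψ) : MonotoneOn ψ (Set.Ici 0) := by
  apply monotoneOn_of_deriv_nonneg (convex_Ici 0) h.continuous.continuousOn
  · exact fun x _ => (h.hasDerivAt x).differentiableAt.differentiableWithinAt
  · intro x hx
    rw [interior_Ici] at hx
    linarith [h.one_le_deriv (le_of_lt hx)]

theorem self_le (h : IsCHModel ψ) {r : ℝ} (hr : 0 ≤ r) : r ≤ ψ r := by
  have hmono : MonotoneOn (fun x => ψ x - x) (Set.Ici 0) := by
    apply monotoneOn_of_deriv_nonneg (convex_Ici 0)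
    · exact (h.continuous.sub continuous_id').continuousOn
    · exact fun x _ =>
        ((h.hasDerivAt x).sub (hasDerivAt_id' x)).differentiableAt.differentiableWithinAt
    · intro x hx
      rw [interior_Ici] at hx
      have : HasDerivAt (fun x => ψ x - x) (deriv ψ x - 1) x :=
        (h.hasDerivAt x).sub (hasDerivAt_id' x)
      rw [this.deriv]
      linarith [h.one_le_deriv (le_of_lt hx)]
  have := hmono (Set.mem_Ici.2 le_rfl) (Set.mem_Ici.2 hr) hr
  simp only [h.2.1] at this
  linarith

theorem hasDerivAt_volume (h : IsCHModel ψ) (m : ℕ) (r : ℝ) :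
    HasDerivAt (fun t => ∫ s in (0:ℝ)..t, ψ s ^ m) (ψ r ^ m) r :=
  intervalIntegral.integral_hasDerivAt_right ((h.continuous.pow m).intervalIntegrable _ _)
    (h.continuous.pow m).aestronglyMeasurable.stronglyMeasurableAtFilter
    (h.continuous.pow m).continuousAt

theorem volume_pos (h : IsCHModel ψ) (m : ℕ) {r : ℝ} (hr : 0 < r) :
    0 < ∫ s in (0:ℝ)..r, ψ s ^ m :=
  intervalIntegral.intervalIntegral_pos_of_pos_on ((h.continuous.pow m).intervalIntegrable _ _)
    (fun x hx => pow_pos (h.2.2.2.2 x hx.1) m) hr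

theorem hasDerivAt_volume_defect (h : IsCHModel ψ) (m : ℕ) (r : ℝ) :
    HasDerivAt (fun t => (m + 1 : ℝ) * deriv ψ t * (∫ s in (0:ℝ)..t, ψ s ^ m) - ψ t ^ (m + 1))
      ((m + 1 : ℝ) * deriv (deriv ψ) r * ∫ s in (0:ℝ)..r, ψ s ^ m) r := by
  have := (((h.hasDerivAt_deriv r).const_mul (m + 1 : ℝ)).mul (h.hasDerivAt_volume m r)).sub
    ((h.hasDerivAt r).pow (m + 1))
  refine this.congr_deriv ?_
  push_cast
  ring

/-- Volume comparison with Euclidean space. -/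
theorem pow_le_deriv_mul_volume (h : IsCHModel ψ) (m : ℕ) {r : ℝ} (hr : 0 ≤ r) :
    ψ r ^ (m + 1) ≤ (m + 1 : ℝ) * deriv ψ r * ∫ s in (0:ℝ)..r, ψ s ^ m := by
  have hmono : MonotoneOn (fun t => (m + 1 : ℝ) * deriv ψ t * (∫ s in (0:ℝ)..t, ψ s ^ m) -
      ψ t ^ (m + 1)) (Set.Ici 0) := by
    apply monotoneOn_of_deriv_nonneg (convex_Ici 0)
    · exact fun x _ => (h.hasDerivAt_volume_defect m x).continuousAt.continuousWithinAt
    · exact fun x _ => (h.hasDerivAt_volume_defect m x).differentiableAt.differentiableWithinAt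
    · intro x hx
      rw [interior_Ici] at hx
      rw [(h.hasDerivAt_volume_defect m x).deriv]
      have := h.2.2.2.1 x (le_of_lt hx)
      have := h.volume_pos m hx
      positivity
  have := hmono (Set.mem_Ici.2 le_rfl) (Set.mem_Ici.2 hr) hr
  simp [h.2.1] at this
  linarith

/-- Rigidity in the volume comparison: equality everywhere forces `ψ r = r`. -/
theorem eq_self_of_volume_eq (h : IsCHModel ψ) (m : ℕ)
    (heq : ∀ r : ℝ, 0 < r →
      ψ r ^ (m + 1) = (m + 1 : ℝ) * deriv ψ r * ∫ s in (0:ℝ)..r, ψ s ^ m)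
    {r : ℝ} (hr : 0 ≤ r) : ψ r = r := by
  have hψ2 : ∀ x : ℝ, 0 < x → deriv (deriv ψ) x = 0 := by
    intro x hx
    have h1 := h.hasDerivAt_volume_defect m x
    have h2 : (fun t => (m + 1 : ℝ) * deriv ψ t * (∫ s in (0:ℝ)..t, ψ s ^ m) - ψ t ^ (m + 1))
        =ᶠ[𝓝 x] fun _ => 0 := by
      filter_upwards [lt_mem_nhds hx] with t ht
      rw [heq t ht, sub_self]
    have h3 := h1.unique ((hasDerivAt_const x (0:ℝ)).congr_of_eventuallyEq h2)
    have := h.volume_pos m hx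
    have hm : (m + 1 : ℝ) ≠ 0 := by positivity
    simpa [hm, this.ne'] using h3
  have hψ1 : ∀ x : ℝ, 0 ≤ x → deriv ψ x ≤ 1 := by
    have hanti : AntitoneOn (deriv ψ) (Set.Ici 0) := by
      apply antitoneOn_of_deriv_nonpos (convex_Ici 0)
      · exact fun x _ => (h.hasDerivAt_deriv x).continuousAt.continuousWithinAt
      · exact fun x _ => (h.hasDerivAt_deriv x).differentiableAt.differentiableWithinAt
      · intro x hx
        rw [interior_Ici] at hx
        exact (hψ2 x hx).le
    intro x hx
    have := hanti (Set.mem_Ici.2 le_rfl) (Set.mem_Ici.2 hx) hx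
    rwa [h.2.2.1] at this
  refine le_antisymm ?_ (h.self_le hr)
  have := Convex.image_sub_le_mul_sub_of_deriv_le (convex_Ici (0:ℝ)) h.continuous.continuousOn
    (fun x _ => (h.hasDerivAt x).differentiableAt.differentiableWithinAt) (C := 1)
    (fun x hx => hψ1 x (by rw [interior_Ici] at hx; exact le_of_lt hx)) 0
    (Set.mem_Ici.2 le_rfl) r (Set.mem_Ici.2 hr) hr
  rw [h.2.1] at this
  linarith

theorem tendsto_mul_logDeriv (hcond : CondA ψ ∨ CondB ψ) :
    Tendsto (fun r => r * (deriv ψ r / ψ r)) atTop atTop := by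
  rcases hcond with ⟨γ, ℓ, -, hγ, hℓ, hlim⟩ | ⟨hlim, -⟩
  · have h1 : Tendsto (fun r : ℝ => r ^ (1 - γ)) atTop atTop := tendsto_rpow_atTop (by linarith)
    refine (h1.atTop_mul_pos hℓ hlim).congr' ?_
    filter_upwards [eventually_gt_atTop 0] with r hr
    rw [mul_div_assoc, ← mul_assoc, ← rpow_add hr]
    simp
  · exact tendsto_id.atTop_mul_atTop₀ hlim

/-- If `r ψ'(r)/ψ(r) → ∞` then `ψ` dominates every power of `r`. -/
theorem exists_rpow_le (h : IsCHModel ψ)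
    (hlim : Tendsto (fun r => r * (deriv ψ r / ψ r)) atTop atTop) {k δ : ℝ} (hk : 0 ≤ k)
    (hδ : 0 < δ) : ∃ M : ℝ, 0 < M ∧ ∀ r : ℝ, 1 ≤ r → r ^ k ≤ M * ψ r ^ δ := by
  obtain ⟨R, hR1, hR⟩ : ∃ R : ℝ, 1 ≤ R ∧ ∀ r, R ≤ r → k / δ ≤ r * (deriv ψ r / ψ r) := by
    obtain ⟨R, hR⟩ := eventually_atTop.1 (hlim.eventually_ge_atTop (k / δ))
    exact ⟨max R 1, le_max_right _ _, fun r hr => hR r ((le_max_left _ _).trans hr)⟩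
  have hd : ∀ x : ℝ, 1 ≤ x → HasDerivAt (fun t => δ * log (ψ t) - k * log t)
      (δ * (deriv ψ x / ψ x) - k * x⁻¹) x := fun x hx =>
    (((h.hasDerivAt x).log (h.2.2.2.2 x (by linarith)).ne').const_mul δ).sub
      ((hasDerivAt_log (by linarith)).const_mul k)
  have hmono : MonotoneOn (fun t => δ * log (ψ t) - k * log t) (Set.Ici R) := by
    apply monotoneOn_of_deriv_nonneg (convex_Ici R)
    · exact fun x hx => (hd x (hR1.trans hx)).continuousAt.continuousWithinAt
    · intro x hx
      rw [interior_Ici] at hx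
      exact (hd x (hR1.trans (le_of_lt hx))).differentiableAt.differentiableWithinAt
    · intro x hx
      rw [interior_Ici] at hx
      have hx0 : 0 < x := by linarith [Set.mem_Ioi.1 hx]
      rw [(hd x (hR1.trans (le_of_lt hx))).deriv]
      have h1 := hR x (le_of_lt hx)
      rw [div_le_iff₀ hδ] at h1
      rw [sub_nonneg, ← div_eq_mul_inv, div_le_iff₀ hx0]
      linarith
  refine ⟨R ^ k, by positivity, fun r hr => ?_⟩
  have hr0 : 0 < r := by linarith
  have hR0 : 0 < R := by linarith
  have hψr : 1 ≤ ψ r := hr.trans (h.self_le hr0.le)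
  rcases le_total r R with hrR | hrR
  · calc r ^ k ≤ R ^ k := rpow_le_rpow hr0.le hrR hk
      _ ≤ R ^ k * ψ r ^ δ := le_mul_of_one_le_right (by positivity) (one_le_rpow hψr hδ.le)
  · have h1 := hmono (Set.mem_Ici.2 le_rfl) (Set.mem_Ici.2 hrR) hrR
    simp only at h1
    have h2 : 0 ≤ δ * log (ψ R) :=
      mul_nonneg hδ.le (log_nonneg (hR1.trans (h.self_le hR0.le)))
    have hψ0 : 0 < ψ r := by linarith
    rw [← log_le_log_iff (by positivity) (by positivity), log_mul (by positivity) (by positivity),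
      log_rpow hr0, log_rpow hR0, log_rpow hψ0]
    linarith

end IsCHModel

/-- The flux `ψ^{n-1} |u'|^{p-1}` of a radially decreasing function. -/
noncomputable def radialFlux (n : ℕ) (p : ℝ) (ψ u : ℝ → ℝ) (r : ℝ) : ℝ :=
  ψ r ^ (n - 1) * (-deriv u r) ^ (p - 1)

/-- The Pohozaev function of a radially decreasing function, written through its flux. -/
noncomputable def fluxPohozaev (n : ℕ) (p q : ℝ) (ψ u : ℝ → ℝ) (r : ℝ) : ℝ :=
  (∫ s in (0:ℝ)..r, ψ s ^ (n - 1)) *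
    ((p - 1) / p * (-deriv u r) ^ p + u r ^ (q + 1) / (q + 1)) -
      radialFlux n p ψ u r * u r / (q + 1)

theorem Real.abs_rpow_sub_two_mul_self (p x : ℝ) (hp : 1 < p) :
    |(|x| ^ (p - 2) * x)| = |x| ^ (p - 1) := by
  rw [abs_mul, abs_of_nonneg (rpow_nonneg (abs_nonneg x) _)]
  rcases (abs_nonneg x).eq_or_lt with h | h
  · rw [← h, mul_zero, zero_rpow (by linarith)]
  · rw [← rpow_add_one h.ne']
    ring_nf

namespace IsRadialSolution

variable {n : ℕ} {p q α : ℝ} {ψ u : ℝ → ℝ}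

theorem continuousOn_deriv (hu : IsRadialSolution n p q ψ ⊤ α u) :
    ContinuousOn (deriv u) (Set.Ici 0) :=
  hu.deriv_cont.mono fun _ hr => ⟨hr, ENNReal.ofReal_lt_top⟩

theorem hasDerivAt (hu : IsRadialSolution n p q ψ ⊤ α u) {r : ℝ} (hr : 0 ≤ r) :
    HasDerivAt u (deriv u r) r :=
  (hu.diff r hr ENNReal.ofReal_lt_top).hasDerivAt

theorem pos' (hu : IsRadialSolution n p q ψ ⊤ α u) {r : ℝ} (hr : 0 ≤ r) : 0 < u r :=
  hu.pos r hr ENNReal.ofReal_lt_top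

theorem deriv_neg (hu : IsRadialSolution n p q ψ ⊤ α u) (hψ : IsCHModel ψ) (hn : 2 ≤ n)
    (hp : 1 < p) {r : ℝ} (hr : 0 < r) : deriv u r < 0 := by
  set w : ℝ → ℝ := fun s => ψ s ^ (n - 1) * |deriv u s| ^ (p - 2) * deriv u s with hw
  have hw0 : w 0 = 0 := by simp [hw, hu.deriv_init]
  have hd : ∀ x : ℝ, 0 < x → HasDerivAt w (-(ψ x ^ (n - 1) * u x ^ q)) x :=
    fun x hx => hu.eqn x hx ENNReal.ofReal_lt_top
  have hcont : ContinuousOn w (Set.Ici 0) := by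
    intro x hx
    rcases (Set.mem_Ici.1 hx).eq_or_lt with rfl | hx
    · have h1 : ContinuousOn (fun s => |ψ s ^ (n - 1)| * |deriv u s| ^ (p - 1)) (Set.Ici 0) :=
        (hψ.continuous.pow _).abs.continuousOn.mul
          (hu.continuousOn_deriv.abs.rpow_const fun _ _ => Or.inr (by linarith))
      have h2 := h1 0 (Set.mem_Ici.2 le_rfl)
      rw [ContinuousWithinAt, hw0]
      rw [ContinuousWithinAt, hψ.2.1, zero_pow (by omega), abs_zero, zero_mul] at h2
      refine squeeze_zero_norm (fun s => le_of_eq ?_) h2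
      simp only [hw]
      rw [norm_eq_abs, mul_assoc, abs_mul, Real.abs_rpow_sub_two_mul_self _ _ hp]
    · exact (hd x hx).continuousAt.continuousWithinAt
  have hanti : StrictAntiOn w (Set.Ici 0) := by
    apply strictAntiOn_of_deriv_neg (convex_Ici 0) hcont
    intro x hx
    rw [interior_Ici] at hx
    rw [(hd x hx).deriv, neg_lt_zero]
    exact mul_pos (pow_pos (hψ.2.2.2.2 x hx) _) (rpow_pos_of_pos (hu.pos' (le_of_lt hx)) _)
  have h1 := hanti (Set.mem_Ici.2 le_rfl) (Set.mem_Ici.2 hr.le) hr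
  rw [hw0] at h1
  by_contra! h2
  have h3 : 0 ≤ w r := mul_nonneg (mul_nonneg (pow_nonneg (hψ.2.2.2.2 r hr).le _)
    (rpow_nonneg (abs_nonneg _) _)) h2
  linarith

theorem hasDerivAt_flux (hu : IsRadialSolution n p q ψ ⊤ α u) (hψ : IsCHModel ψ) (hn : 2 ≤ n)
    (hp : 1 < p) {r : ℝ} (hr : 0 < r) :
    HasDerivAt (radialFlux n p ψ u) (ψ r ^ (n - 1) * u r ^ q) r := by
  have h1 := (hu.eqn r hr ENNReal.ofReal_lt_top).neg
  rw [neg_neg] at h1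
  refine h1.congr_of_eventuallyEq ?_
  filter_upwards [lt_mem_nhds hr] with s hs
  have h2 := hu.deriv_neg hψ hn hp hs
  have h3 : 0 < -deriv u s := by linarith
  simp only [radialFlux, Pi.neg_apply]
  rw [abs_of_neg h2, show p - 1 = p - 2 + 1 by ring, rpow_add_one h3.ne']
  ring

theorem flux_pos (hu : IsRadialSolution n p q ψ ⊤ α u) (hψ : IsCHModel ψ) (hn : 2 ≤ n)
    (hp : 1 < p) {r : ℝ} (hr : 0 < r) : 0 < radialFlux n p ψ u r :=
  mul_pos (pow_pos (hψ.2.2.2.2 r hr) _)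
    (rpow_pos_of_pos (by linarith [hu.deriv_neg hψ hn hp hr]) _)

theorem continuousOn_flux (hu : IsRadialSolution n p q ψ ⊤ α u) (hψ : IsCHModel ψ)
    (hp : 1 < p) : ContinuousOn (radialFlux n p ψ u) (Set.Ici 0) :=
  (hψ.continuous.pow _).continuousOn.mul
    (hu.continuousOn_deriv.neg.rpow_const fun _ _ => Or.inr (by linarith))

/-- `(|u'|^p)' = p/(p-1) |u'| (u^q - (n-1) (ψ'/ψ) |u'|^{p-1})`. -/
theorem hasDerivAt_neg_deriv_rpow (hu : IsRadialSolution n p q ψ ⊤ α u) (hψ : IsCHModel ψ)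
    (hn : 2 ≤ n) (hp : 1 < p) {r : ℝ} (hr : 0 < r) :
    HasDerivAt (fun s => (-deriv u s) ^ p)
      (p / (p - 1) * (-deriv u r *
        (u r ^ q - ((n : ℝ) - 1) * (deriv ψ r / ψ r) * (-deriv u r) ^ (p - 1)))) r := by
  have hp1 : p - 1 ≠ 0 := by linarith
  have hψr := hψ.2.2.2.2 r hr
  have hv : 0 < -deriv u r := by linarith [hu.deriv_neg hψ hn hp hr]
  have hquot : ∀ s : ℝ, 0 < s → radialFlux n p ψ u s / ψ s ^ (n - 1) = (-deriv u s) ^ (p - 1) :=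
    fun s hs => mul_div_cancel_left₀ _ (pow_pos (hψ.2.2.2.2 s hs) _).ne'
  have h1 := ((hu.hasDerivAt_flux hψ hn hp hr).div ((hψ.hasDerivAt r).pow (n - 1))
    (pow_pos hψr _).ne').rpow_const (p := p / (p - 1))
    (Or.inl (by
      simp only [Pi.div_apply, Pi.pow_apply]
      rw [hquot r hr]; exact (rpow_pos_of_pos hv _).ne'))
  have heq : (fun s => (-deriv u s) ^ p) =ᶠ[𝓝 r]
      fun s => (radialFlux n p ψ u / ψ ^ (n - 1)) s ^ (p / (p - 1)) := by
    filter_upwards [lt_mem_nhds hr] with s hs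
    have hvs : 0 < -deriv u s := by linarith [hu.deriv_neg hψ hn hp hs]
    simp only [Pi.div_apply, Pi.pow_apply]
    rw [hquot s hs, ← rpow_mul hvs.le]
    congr 1
    field_simp
  refine (h1.congr_of_eventuallyEq heq).congr_deriv ?_
  simp only [Pi.div_apply, Pi.pow_apply]
  rw [hquot r hr, ← rpow_mul hv.le,
    show (p - 1) * (p / (p - 1) - 1) = 1 by field_simp; ring, rpow_one]
  obtain ⟨k, rfl⟩ : ∃ k, n = k + 2 := ⟨n - 2, by omega⟩
  simp only [radialFlux, show k + 2 - 1 = k + 1 by omega, Nat.add_sub_cancel]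
  push_cast
  field_simp
  ring

theorem hasDerivAt_fluxPohozaev (hu : IsRadialSolution n p q ψ ⊤ α u) (hψ : IsCHModel ψ)
    (hn : 2 ≤ n) (hp : 1 < p) (hq : 0 < q) {r : ℝ} (hr : 0 < r) :
    HasDerivAt (fluxPohozaev n p q ψ u) (Kfun n p q ψ r * (-deriv u r) ^ p) r := by
  have hp1 : p - 1 ≠ 0 := by linarith
  have hv : 0 < -deriv u r := by linarith [hu.deriv_neg hψ hn hp hr]
  have hur := hu.pos' hr.le
  have h1 := ((hψ.hasDerivAt_volume (n - 1) r).mul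
    (((hu.hasDerivAt_neg_deriv_rpow hψ hn hp hr).const_mul ((p - 1) / p)).add
      (((hu.hasDerivAt hr.le).rpow_const (p := q + 1) (Or.inl hur.ne')).div_const (q + 1)))).sub
    (((hu.hasDerivAt_flux hψ hn hp hr).mul (hu.hasDerivAt hr.le)).div_const (q + 1))
  refine h1.congr_deriv ?_
  have e1 : u r ^ (q + 1) = u r ^ q * u r := rpow_add_one hur.ne' q
  have e2 : (-deriv u r) ^ p = (-deriv u r) ^ (p - 1) * (-deriv u r) := by
    rw [← rpow_add_one hv.ne']; ring_nf
  have hψr := (hψ.2.2.2.2 r hr).ne'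
  have hq1 : q + 1 ≠ 0 := by linarith
  simp only [Kfun, radialFlux, add_sub_cancel_right, Pi.add_apply]
  rw [e1, e2]
  field_simp
  ring

theorem continuousOn_fluxPohozaev (hu : IsRadialSolution n p q ψ ⊤ α u) (hψ : IsCHModel ψ)
    (hp : 1 < p) (hq : 0 < q) : ContinuousOn (fluxPohozaev n p q ψ u) (Set.Ici 0) := by
  have hV : ContinuousOn (fun r => ∫ s in (0:ℝ)..r, ψ s ^ (n - 1)) (Set.Ici 0) :=
    fun r _ => (hψ.hasDerivAt_volume (n - 1) r).continuousAt.continuousWithinAt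
  have hcu : ContinuousOn u (Set.Ici 0) :=
    fun r hr => (hu.hasDerivAt hr).continuousAt.continuousWithinAt
  exact (hV.mul (((hu.continuousOn_deriv.neg.rpow_const
    fun _ _ => Or.inr (by linarith)).const_mul ((p - 1) / p)).add
      ((hcu.rpow_const fun _ _ => Or.inr (by linarith)).div_const _))).sub
    (((hu.continuousOn_flux hψ hp).mul hcu).div_const _)

theorem fluxPohozaev_zero (hψ : IsCHModel ψ) (hn : 2 ≤ n) : fluxPohozaev n p q ψ u 0 = 0 := by
  simp [fluxPohozaev, radialFlux, hψ.2.1, show n - 1 ≠ 0 by omega]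

end IsRadialSolution

namespace IsRadialSolution

variable {n : ℕ} {p q α : ℝ} {ψ u : ℝ → ℝ}

theorem deriv_flux_le (hu : IsRadialSolution n p q ψ ⊤ α u) (hψ : IsCHModel ψ) (hq : 0 < q)
    {β C : ℝ} (hC : 0 < C) (hdecay : ∀ r : ℝ, 1 ≤ r → u r ≤ C * ψ r ^ (-β)) {r : ℝ}
    (hr : 1 ≤ r) :
    ψ r ^ (n - 1) * u r ^ q ≤ C ^ q * ψ r ^ (((n - 1 : ℕ) : ℝ) - β * q) := by
  have hr0 : 0 < r := by linarith
  have hψr := hψ.2.2.2.2 r hr0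
  calc ψ r ^ (n - 1) * u r ^ q ≤ ψ r ^ (n - 1) * (C * ψ r ^ (-β)) ^ q := by
        gcongr
        · exact (hu.pos' hr0.le).le
        · exact hdecay r hr
    _ = C ^ q * ψ r ^ (((n - 1 : ℕ) : ℝ) - β * q) := by
        rw [mul_rpow hC.le (by positivity), ← rpow_mul hψr.le, ← rpow_natCast, mul_left_comm,
          ← rpow_add hψr]
        ring_nf

/-- A power decay `u ≤ C ψ^{-β}` with `β q ≤ n - 1` self-improves to every exponent
`b < β q / (p - 1)`. -/
theorem improve_decay (hu : IsRadialSolution n p q ψ ⊤ α u) (hψ : IsCHModel ψ) (hn : 2 ≤ n)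
    (hp : 1 < p) (hq : 0 < q)
    (hlim : Tendsto (fun r => r * (deriv ψ r / ψ r)) atTop atTop)
    (hu0 : Tendsto u atTop (𝓝 0)) {β b C : ℝ} (hC : 0 < C)
    (hdecay : ∀ r : ℝ, 1 ≤ r → u r ≤ C * ψ r ^ (-β)) (hβ : β * q ≤ ((n - 1 : ℕ) : ℝ))
    (hb0 : 0 ≤ b) (hb : b < β * q / (p - 1)) :
    ∃ C' : ℝ, 0 < C' ∧ ∀ r : ℝ, 1 ≤ r → u r ≤ C' * ψ r ^ (-b) := by
  have hp1 : 0 < p - 1 := by linarith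
  have hψ1 : ∀ r : ℝ, 1 ≤ r → 1 ≤ ψ r := fun r hr => hr.trans (hψ.self_le (by linarith))
  set W := radialFlux n p ψ u with hW
  set e : ℝ := ((n - 1 : ℕ) : ℝ) - β * q with he
  have he0 : 0 ≤ e := by linarith
  have hW1 : 0 < W 1 := hu.flux_pos hψ hn hp one_pos
  set C₁ : ℝ := W 1 + C ^ q with hC₁
  have hC₁0 : 0 < C₁ := by positivity
  have hWle : ∀ r : ℝ, 1 ≤ r → W r ≤ C₁ * (r * ψ r ^ e) := by
    intro r hr
    have hψr := hψ1 r hr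
    have h1 := Convex.image_sub_le_mul_sub_of_deriv_le (convex_Icc 1 r) (f := W)
      (C := C ^ q * ψ r ^ e)
      ((hu.continuousOn_flux hψ hp).mono fun x hx => Set.mem_Ici.2 (by linarith [hx.1]))
      (by
        intro x hx
        rw [interior_Icc] at hx
        exact (hu.hasDerivAt_flux hψ hn hp
          (by linarith [hx.1])).differentiableAt.differentiableWithinAt)
      (by
        intro x hx
        rw [interior_Icc] at hx
        have hx0 : 0 < x := by linarith [hx.1]
        rw [(hu.hasDerivAt_flux hψ hn hp hx0).deriv]
        refine (hu.deriv_flux_le hψ hq hC hdecay hx.1.le).trans ?_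
        gcongr
        · exact (hψ.2.2.2.2 x hx0).le
        · exact hψ.monotoneOn (Set.mem_Ici.2 hx0.le) (Set.mem_Ici.2 (by linarith)) hx.2.le)
      1 (Set.left_mem_Icc.2 hr) r (Set.right_mem_Icc.2 hr) hr
    have h2 : 1 ≤ ψ r ^ e := one_le_rpow hψr he0
    have h3 : 1 ≤ r * ψ r ^ e := one_le_mul_of_one_le_of_one_le hr h2
    have h4 : W 1 ≤ W 1 * (r * ψ r ^ e) := le_mul_of_one_le_right hW1.le h3
    have h5 : 0 ≤ C ^ q * ψ r ^ e := by positivity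
    calc W r ≤ W 1 + C ^ q * ψ r ^ e * (r - 1) := by linarith
      _ ≤ C₁ * (r * ψ r ^ e) := by rw [hC₁]; nlinarith
  obtain ⟨M, hM, hgrow⟩ := hψ.exists_rpow_le hlim (k := 1 / (p - 1) + 2)
    (δ := β * q / (p - 1) - b) (by positivity) (by linarith)
  set C₂ : ℝ := C₁ ^ (1 / (p - 1)) * M with hC₂
  have hC₂0 : 0 < C₂ := by positivity
  have hv : ∀ r : ℝ, 1 ≤ r → -deriv u r ≤ C₂ * ψ r ^ (-b) * (r ^ 2)⁻¹ := by
    intro r hr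
    have hr0 : 0 < r := by linarith
    have hψr : 0 < ψ r := hψ.2.2.2.2 r hr0
    have hvr : 0 < -deriv u r := by linarith [hu.deriv_neg hψ hn hp hr0]
    have h1 : (-deriv u r) ^ (p - 1) ≤ C₁ * (r * ψ r ^ (-(β * q))) := by
      have h2 := hWle r hr
      rw [hW, radialFlux, he, sub_eq_add_neg _ (β * q), rpow_add hψr, rpow_natCast] at h2
      refine le_of_mul_le_mul_left ?_ (pow_pos hψr (n - 1))
      linarith
    have h2 : -deriv u r ≤ (C₁ * (r * ψ r ^ (-(β * q)))) ^ (1 / (p - 1)) := by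
      calc -deriv u r = ((-deriv u r) ^ (p - 1)) ^ (1 / (p - 1)) := by
            rw [← rpow_mul hvr.le, mul_one_div_cancel hp1.ne', rpow_one]
        _ ≤ _ := by gcongr
    rw [mul_rpow hC₁0.le (by positivity), mul_rpow hr0.le (by positivity), ← rpow_mul hψr.le] at h2
    have h3 := hgrow r hr
    rw [rpow_add hr0, rpow_two] at h3
    rw [← div_eq_mul_inv, le_div_iff₀ (by positivity)]
    have h4 : ψ r ^ (-(β * q) * (1 / (p - 1))) * ψ r ^ (β * q / (p - 1) - b) = ψ r ^ (-b) := by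
      rw [← rpow_add hψr]
      ring_nf
    calc -deriv u r * r ^ 2
        ≤ C₁ ^ (1 / (p - 1)) * (r ^ (1 / (p - 1)) * ψ r ^ (-(β * q) * (1 / (p - 1)))) * r ^ 2 := by
          gcongr
      _ = C₁ ^ (1 / (p - 1)) * ψ r ^ (-(β * q) * (1 / (p - 1))) * (r ^ (1 / (p - 1)) * r ^ 2) := by
          ring
      _ ≤ C₁ ^ (1 / (p - 1)) * ψ r ^ (-(β * q) * (1 / (p - 1))) *
          (M * ψ r ^ (β * q / (p - 1) - b)) := by gcongr
      _ = C₁ ^ (1 / (p - 1)) * M * (ψ r ^ (-(β * q) * (1 / (p - 1))) *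
          ψ r ^ (β * q / (p - 1) - b)) := by ring
      _ = C₂ * ψ r ^ (-b) := by rw [h4]
  refine ⟨C₂, hC₂0, fun r hr => ?_⟩
  have hr0 : 0 < r := by linarith
  have hψr : 0 < ψ r := hψ.2.2.2.2 r hr0
  set D : ℝ := C₂ * ψ r ^ (-b) with hD
  have hD0 : 0 < D := by positivity
  have hd : ∀ s : ℝ, r ≤ s → HasDerivAt (fun s => u s - D * s⁻¹)
      (deriv u s - D * -(s ^ 2)⁻¹) s := fun s hs =>
    (hu.hasDerivAt (by linarith)).sub ((hasDerivAt_inv (by linarith)).const_mul D)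
  have hmono : MonotoneOn (fun s => u s - D * s⁻¹) (Set.Ici r) := by
    apply monotoneOn_of_deriv_nonneg (convex_Ici r)
    · exact fun s hs => (hd s hs).continuousAt.continuousWithinAt
    · intro s hs
      rw [interior_Ici] at hs
      exact (hd s (le_of_lt hs)).differentiableAt.differentiableWithinAt
    · intro s hs
      rw [interior_Ici] at hs
      have hs' : r < s := hs
      rw [(hd s hs'.le).deriv]
      have h1 := hv s (hr.trans hs'.le)
      have h2 : ψ s ^ (-b) ≤ ψ r ^ (-b) := rpow_le_rpow_of_nonpos hψr
        (hψ.monotoneOn (Set.mem_Ici.2 hr0.le) (Set.mem_Ici.2 (by linarith)) hs'.le) (by linarith)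
      have h3 : C₂ * ψ s ^ (-b) * (s ^ 2)⁻¹ ≤ D * (s ^ 2)⁻¹ := by
        rw [hD]
        gcongr
      linarith
  have hlim0 : Tendsto (fun s => u s - D * s⁻¹) atTop (𝓝 0) := by
    simpa using hu0.sub (tendsto_inv_atTop_zero.const_mul D)
  have h1 : u r - D * r⁻¹ ≤ 0 := by
    refine ge_of_tendsto hlim0 ?_
    filter_upwards [eventually_ge_atTop r] with s hs
    exact hmono (Set.mem_Ici.2 le_rfl) (Set.mem_Ici.2 hs) hs
  have h2 : D * r⁻¹ ≤ D := mul_le_of_le_one_right hD0.le (inv_le_one_of_one_le₀ hr)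
  linarith

theorem exists_fast_decay (hu : IsRadialSolution n p q ψ ⊤ α u) (hψ : IsCHModel ψ) (hn : 2 ≤ n)
    (hp : 1 < p) (hpq : p - 1 < q)
    (hlim : Tendsto (fun r => r * (deriv ψ r / ψ r)) atTop atTop)
    (hu0 : Tendsto u atTop (𝓝 0)) {β C : ℝ} (hC : 0 < C) (hβ : 0 < β)
    (hdecay : ∀ r : ℝ, 1 ≤ r → u r ≤ C * ψ r ^ (-β)) :
    ∃ β' C' : ℝ, ((n - 1 : ℕ) : ℝ) < β' * q ∧ 0 < C' ∧
      ∀ r : ℝ, 1 ≤ r → u r ≤ C' * ψ r ^ (-β') := by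
  by_contra! hcon
  have hq : 0 < q := by linarith
  have hp1 : 0 < p - 1 := by linarith
  obtain ⟨κ, hκ1, hκ⟩ := exists_between ((one_lt_div hp1).2 hpq)
  have hiter : ∀ k : ℕ, ∃ C' : ℝ, 0 < C' ∧ ∀ r : ℝ, 1 ≤ r → u r ≤ C' * ψ r ^ (-(β * κ ^ k)) := by
    intro k
    induction k with
    | zero => exact ⟨C, hC, by simpa using hdecay⟩
    | succ k ih =>
      obtain ⟨C', hC', h'⟩ := ih
      have hβk : 0 < β * κ ^ k := by positivity
      refine hu.improve_decay hψ hn hp hq hlim hu0 hC' h' ?_ (by positivity) ?_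
      · by_contra! hlt
        obtain ⟨r, hr, hlt'⟩ := hcon _ C' hlt hC'
        exact (h' r hr).not_gt hlt'
      · rw [pow_succ, ← mul_assoc, mul_div_assoc]
        exact mul_lt_mul_of_pos_left hκ hβk
  obtain ⟨k, hk⟩ := pow_unbounded_of_one_lt (((n - 1 : ℕ) : ℝ) / (β * q)) hκ1
  obtain ⟨C', hC', h'⟩ := hiter k
  rw [div_lt_iff₀ (by positivity)] at hk
  obtain ⟨r, hr, hlt⟩ := hcon (β * κ ^ k) C' (by linarith) hC'
  exact (h' r hr).not_gt hlt

/-- If `u ≤ C ψ^{-β}` with `β q > n - 1` then the flux is bounded. -/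
theorem exists_flux_le (hu : IsRadialSolution n p q ψ ⊤ α u) (hψ : IsCHModel ψ) (hn : 2 ≤ n)
    (hp : 1 < p) (hq : 0 < q)
    (hlim : Tendsto (fun r => r * (deriv ψ r / ψ r)) atTop atTop) {β C : ℝ} (hC : 0 < C)
    (hdecay : ∀ r : ℝ, 1 ≤ r → u r ≤ C * ψ r ^ (-β)) (hβ : ((n - 1 : ℕ) : ℝ) < β * q) :
    ∃ B : ℝ, ∀ r : ℝ, 1 ≤ r → radialFlux n p ψ u r ≤ B := by
  obtain ⟨M, hM, hgrow⟩ := hψ.exists_rpow_le hlim (k := 2) (δ := β * q - ((n - 1 : ℕ) : ℝ))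
    zero_le_two (by linarith)
  set D : ℝ := C ^ q * M with hD
  have hD0 : 0 < D := by positivity
  have hd : ∀ s : ℝ, 1 ≤ s → HasDerivAt (fun s => radialFlux n p ψ u s + D * s⁻¹)
      (ψ s ^ (n - 1) * u s ^ q + D * -(s ^ 2)⁻¹) s := fun s hs =>
    (hu.hasDerivAt_flux hψ hn hp (by linarith)).add
      ((hasDerivAt_inv (by linarith)).const_mul D)
  have hanti : AntitoneOn (fun s => radialFlux n p ψ u s + D * s⁻¹) (Set.Ici 1) := by
    apply antitoneOn_of_deriv_nonpos (convex_Ici 1)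
    · exact fun s hs => (hd s hs).continuousAt.continuousWithinAt
    · intro s hs
      rw [interior_Ici] at hs
      exact (hd s (le_of_lt hs)).differentiableAt.differentiableWithinAt
    · intro s hs
      rw [interior_Ici] at hs
      have hs1 : 1 < s := hs
      have hs0 : 0 < s := by linarith
      have hψs := hψ.2.2.2.2 s hs0
      rw [(hd s hs1.le).deriv]
      have h1 := hu.deriv_flux_le hψ hq hC hdecay hs1.le
      have h2 := hgrow s hs1.le
      rw [rpow_two] at h2
      have h3 : ψ s ^ (((n - 1 : ℕ) : ℝ) - β * q) ≤ M * (s ^ 2)⁻¹ := by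
        rw [← neg_sub (β * q), rpow_neg hψs.le, ← div_eq_mul_inv, le_div_iff₀ (by positivity),
          inv_mul_le_iff₀ (by positivity)]
        linarith
      have h4 : C ^ q * ψ s ^ (((n - 1 : ℕ) : ℝ) - β * q) ≤ D * (s ^ 2)⁻¹ := by
        rw [hD, mul_assoc]
        gcongr
      linarith
  refine ⟨radialFlux n p ψ u 1 + D, fun r hr => ?_⟩
  have h1 := hanti (Set.mem_Ici.2 le_rfl) (Set.mem_Ici.2 hr) hr
  simp only [inv_one, mul_one] at h1
  have : 0 < D * r⁻¹ := by positivity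
  linarith

end IsRadialSolution

theorem IsCHModel.Kfun_le {n : ℕ} {p q : ℝ} {ψ : ℝ → ℝ} (hψ : IsCHModel ψ) (hn : 2 ≤ n)
    (hp1 : 1 < p) (hpn : p < n) (hq : (n : ℝ) * p / ((n : ℝ) - p) - 1 ≤ q) {r : ℝ} (hr : 0 < r) :
    Kfun n p q ψ r ≤ ((n : ℝ) - 1) / (n * ψ r) *
      (ψ r ^ n - n * deriv ψ r * ∫ s in (0:ℝ)..r, ψ s ^ (n - 1)) := by
  have hψr := hψ.2.2.2.2 r hr
  have hnp : 0 < (n : ℝ) - p := by linarith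
  have hn0 : 0 < (n : ℝ) := by linarith
  have h1 : 1 / (q + 1) ≤ (n - p) / (n * p) := by
    rw [← one_div_div ((n : ℝ) * p)]
    exact one_div_le_one_div_of_le (by positivity) (by linarith)
  have h2 : (p - 1) / p + 1 / (q + 1) ≤ ((n : ℝ) - 1) / n := by
    calc (p - 1) / p + 1 / (q + 1) ≤ (p - 1) / p + (n - p) / (n * p) := by gcongr
      _ = ((n : ℝ) - 1) / n := by field_simp; ring
  obtain ⟨m, rfl⟩ : ∃ m, n = m + 1 := ⟨n - 1, by omega⟩
  simp only [Kfun, Nat.add_sub_cancel]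
  calc _ ≤ (((m + 1 : ℕ) : ℝ) - 1) / (m + 1 : ℕ) * ψ r ^ m -
        (((m + 1 : ℕ) : ℝ) - 1) * (deriv ψ r / ψ r) * ∫ s in (0:ℝ)..r, ψ s ^ m := by gcongr
    _ = _ := by
      field_simp
      ring

/-- no global radial solution decays like a power of `ψ`. -/
theorem statement_14 (n : ℕ) (hn : 2 ≤ n) (p q : ℝ) (hp1 : 1 < p) (hpn : p < n)
    (hq : (n : ℝ) * p / ((n : ℝ) - p) - 1 ≤ q)
    (ψ : ℝ → ℝ) (hψ : IsCHModel ψ)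
    (hpc : Tendsto (fun r : ℝ => ∫ s in (0:ℝ)..r, Theta n ψ s ^ (1 / (p - 1)))
      atTop atTop)
    (hcond : CondA ψ ∨ CondB ψ)
    (α : ℝ) (hα : 0 < α)
    (u : ℝ → ℝ) (hu : IsRadialSolution n p q ψ ⊤ α u) :
    ¬ ∃ C β : ℝ, 0 < C ∧ 0 < β ∧ ∀ r : ℝ, 0 < r → u r ≤ C * ψ r ^ (-β) := by
  rintro ⟨C, β, hC, hβ, hdecay⟩
  have hnp : 0 < (n : ℝ) - p := by linarith
  have hpq : p - 1 < q := by
    have : p < n * p / (n - p) := by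
      rw [lt_div_iff₀ hnp]
      nlinarith
    linarith
  have hq0 : 0 < q := by linarith
  have hlim := IsCHModel.tendsto_mul_logDeriv hcond
  have hψtop : Tendsto ψ atTop atTop := by
    refine tendsto_atTop_mono' _ ?_ tendsto_id
    filter_upwards [eventually_ge_atTop 0] with r hr using hψ.self_le hr
  have hu0 : Tendsto u atTop (𝓝 0) := by
    have h1 : Tendsto (fun r => C * ψ r ^ (-β)) atTop (𝓝 0) := by
      simpa using ((tendsto_rpow_neg_atTop hβ).comp hψtop).const_mul C
    refine squeeze_zero' ?_ ?_ h1
    · filter_upwards [eventually_ge_atTop 0] with r hr using (hu.pos' hr).le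
    · filter_upwards [eventually_gt_atTop 0] with r hr using hdecay r hr
  obtain ⟨β', C', hβ', hC', hdecay'⟩ := hu.exists_fast_decay hψ hn hp1 hpq hlim hu0 hC hβ
    fun r hr => hdecay r (by linarith)
  obtain ⟨B, hB⟩ := hu.exists_flux_le hψ hn hp1 hq0 hlim hC' hdecay' hβ'
  have hn1 : n - 1 + 1 = n := by omega
  have hcast : ((n - 1 : ℕ) : ℝ) + 1 = n := by exact_mod_cast hn1
  have hcomp : ∀ r : ℝ, 0 < r → ψ r ^ n ≤ n * deriv ψ r * ∫ s in (0:ℝ)..r, ψ s ^ (n - 1) := by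
    intro r hr
    simpa only [hn1, hcast] using hψ.pow_le_deriv_mul_volume (n - 1) hr.le
  have hcoef : ∀ r : ℝ, 0 < r → 0 < ((n : ℝ) - 1) / (n * ψ r) := fun r hr =>
    div_pos (by linarith) (mul_pos (by linarith) (hψ.2.2.2.2 r hr))
  have hvpos : ∀ r : ℝ, 0 < r → 0 < (-deriv u r) ^ p := fun r hr =>
    rpow_pos_of_pos (by linarith [hu.deriv_neg hψ hn hp1 hr]) _
  have hanti : AntitoneOn (fluxPohozaev n p q ψ u) (Set.Ici 0) := by
    apply antitoneOn_of_deriv_nonpos (convex_Ici 0) (hu.continuousOn_fluxPohozaev hψ hp1 hq0)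
    · intro r hr
      rw [interior_Ici] at hr
      exact (hu.hasDerivAt_fluxPohozaev hψ hn hp1 hq0
        hr).differentiableAt.differentiableWithinAt
    · intro r hr
      rw [interior_Ici] at hr
      rw [(hu.hasDerivAt_fluxPohozaev hψ hn hp1 hq0 hr).deriv]
      refine mul_nonpos_of_nonpos_of_nonneg ?_ (hvpos r hr).le
      exact (hψ.Kfun_le hn hp1 hpn hq hr).trans
        (mul_nonpos_of_nonneg_of_nonpos (hcoef r hr).le (by linarith [hcomp r hr]))
  have hlow : ∀ r : ℝ, 1 ≤ r → -(B / (q + 1)) * u r ≤ fluxPohozaev n p q ψ u r := by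
    intro r hr
    have hr0 : 0 < r := by linarith
    have hur := hu.pos' hr0.le
    have h1 : 0 ≤ (∫ s in (0:ℝ)..r, ψ s ^ (n - 1)) *
        ((p - 1) / p * (-deriv u r) ^ p + u r ^ (q + 1) / (q + 1)) := by
      have := hψ.volume_pos (n - 1) hr0
      have := hvpos r hr0
      have : 0 < p - 1 := by linarith
      positivity
    have h2 : radialFlux n p ψ u r * u r / (q + 1) ≤ B * u r / (q + 1) := by
      gcongr
      exact hB r hr
    rw [fluxPohozaev, show -(B / (q + 1)) * u r = -(B * u r / (q + 1)) by ring]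
    linarith
  have hzero : ∀ r : ℝ, 0 ≤ r → fluxPohozaev n p q ψ u r = 0 := by
    intro r hr
    refine le_antisymm ?_ ?_
    · rw [← IsRadialSolution.fluxPohozaev_zero (p := p) (q := q) (u := u) hψ hn]
      exact hanti (Set.mem_Ici.2 le_rfl) (Set.mem_Ici.2 hr) hr
    · have h1 : Tendsto (fun s => -(B / (q + 1)) * u s) atTop (𝓝 0) := by
        simpa using hu0.const_mul (-(B / (q + 1)))
      refine le_of_tendsto h1 ?_
      filter_upwards [eventually_ge_atTop (max r 1)] with s hs
      have hrs : r ≤ s := (le_max_left _ _).trans hs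
      exact (hlow s ((le_max_right _ _).trans hs)).trans
        (hanti (Set.mem_Ici.2 hr) (Set.mem_Ici.2 (hr.trans hrs)) hrs)
  have hK : ∀ r : ℝ, 0 < r → Kfun n p q ψ r = 0 := by
    intro r hr
    have h1 : fluxPohozaev n p q ψ u =ᶠ[𝓝 r] fun _ => 0 := by
      filter_upwards [lt_mem_nhds hr] with s hs using hzero s hs.le
    have h2 := (hu.hasDerivAt_fluxPohozaev hψ hn hp1 hq0 hr).unique
      ((hasDerivAt_const r (0:ℝ)).congr_of_eventuallyEq h1)
    exact (mul_eq_zero.1 h2).resolve_right (hvpos r hr).ne'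
  have hself : ∀ r : ℝ, 0 ≤ r → ψ r = r := fun r hr => by
    refine hψ.eq_self_of_volume_eq (n - 1) (fun s hs => ?_) hr
    rw [hn1, hcast]
    refine le_antisymm (hcomp s hs) ?_
    have h1 := hψ.Kfun_le hn hp1 hpn hq hs
    rw [hK s hs] at h1
    linarith [nonneg_of_mul_nonneg_right h1 (hcoef s hs)]
  obtain ⟨M, hM, hgrow⟩ := hψ.exists_rpow_le hlim (k := 2) (δ := 1) zero_le_two one_pos
  have h1 := hgrow (M + 1) (by linarith)
  rw [rpow_one, rpow_two, hself (M + 1) (by linarith)] at h1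
  nlinarith
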